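/- Let 𝒞 ⊆ 𝒜 be a linear code with weight distribution (c_i), and let d be a natural number with 1 ≤ d ≤ n such that every nonzero A ∈ 𝒞 has rank(A) ≥ 2d and |𝒞| = q^{m(n−d+1)} (i.e. 𝒞 is a maximum skew rank distance (MSRD) code attaining the Singleton bound). Then c_0 = 1, c_i = 0 for 1 ≤ i ≤ d−1, and for every 0 ≤ r ≤ n−d, c_{d+r} = Σ_{i=0}^{r} (−1)^{r−i} q^{(r−i)(r−i−1)} [d+r; d+i] · [n; d+r] · (q^{m(i+1)} − 1). -/

import Mathlib

/-- The skew-q-nary Gaussian coefficient `[x;k]` for real `x`. -/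
noncomputable def gaussQ (q x : ℝ) (k : ℕ) : ℝ :=
  ∏ i ∈ Finset.range k, (q ^ (2 * x) - q ^ (2 * (i : ℝ))) / (q ^ (2 * (k : ℝ)) - q ^ (2 * (i : ℝ)))

/-!
By Poisson summation for a nontrivial additive character of `F`, a rank function summed over a code
becomes its Fourier transform summed over the dual code. Splitting off the first row and column of
an alternating matrix evaluates the transform of `[n - i; j]` at `M`: it is a power of `q` times
`[n - s; n - j]`, where `2 * s` is the rank of `M - Mᵀ`. Hence the `j`-th rank moments of a code are
proportional to the `(n - j)`-th rank moments of its dual. For a code attaining the Singleton bound,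
the moment of order `n - d + 1` involves only the zero codeword, which forces the dual to have so
large a minimum distance that all lower moments of the code are determined by it. Gaussian inversion
of these moments gives the weight distribution.
-/

open Finset

/-! ### Gaussian binomial coefficients -/

/-- The `q`-integer `1 + b + ⋯ + b ^ (k - 1)`, free of the division in `(b ^ k - 1) / (b - 1)`. -/
def qInt (b k : ℕ) : ℕ := ∑ l ∈ range k, b ^ l

/-- The `q`-factorial in base `b`. -/
def qFactorial (b n : ℕ) : ℕ := ∏ k ∈ range n, qInt b (k + 1)

/-- The Gaussian binomial coefficient in base `b`. The Pascal recurrence makes it a natural number,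
whereas the product formula `gaussQ`, whose base is `b = q ^ 2`, is a quotient. -/
def qBinom (b : ℕ) : ℕ → ℕ → ℕ
  | _, 0 => 1
  | 0, _ + 1 => 0
  | n + 1, j + 1 => qBinom b n j + b ^ (j + 1) * qBinom b n (j + 1)

section QInt

variable (b : ℕ)

lemma qInt_add (k l : ℕ) : qInt b (k + l) = qInt b k + b ^ k * qInt b l := by
  simp only [qInt, sum_range_add, pow_add, mul_sum]

lemma cast_qInt_mul {R : Type*} [CommRing R] (k : ℕ) :
    (qInt b k : R) * ((b : R) - 1) = (b : R) ^ k - 1 := by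
  simpa only [qInt, Nat.cast_sum, Nat.cast_pow] using geom_sum_mul (b : R) k

lemma qInt_succ_pos (k : ℕ) : 0 < qInt b (k + 1) := by
  rw [add_comm, qInt_add]
  simp [qInt]

lemma qFactorial_pos (n : ℕ) : 0 < qFactorial b n :=
  prod_pos fun _ _ => qInt_succ_pos b _

lemma qFactorial_succ (n : ℕ) : qFactorial b (n + 1) = qFactorial b n * qInt b (n + 1) :=
  prod_range_succ _ n

end QInt

namespace qBinom

variable (b : ℕ)

@[simp] lemma zero_right (n : ℕ) : qBinom b n 0 = 1 := by cases n <;> rfl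

lemma succ_succ (n j : ℕ) :
    qBinom b (n + 1) (j + 1) = qBinom b n j + b ^ (j + 1) * qBinom b n (j + 1) := rfl

lemma eq_zero_of_lt {n j : ℕ} (h : n < j) : qBinom b n j = 0 := by
  induction n generalizing j with
  | zero => obtain ⟨j, rfl⟩ := Nat.exists_eq_succ_of_ne_zero h.ne'; rfl
  | succ n ih =>
    obtain ⟨j, rfl⟩ := Nat.exists_eq_succ_of_ne_zero (by omega : j ≠ 0)
    simp [succ_succ, ih (by omega : n < j), ih (by omega : n < j + 1)]

@[simp] lemma self (n : ℕ) : qBinom b n n = 1 := by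
  induction n with
  | zero => rfl
  | succ n ih => simp [succ_succ, ih, eq_zero_of_lt b n.lt_succ_self]

lemma pos {n j : ℕ} (h : j ≤ n) : 0 < qBinom b n j := by
  induction n generalizing j with
  | zero => simp [Nat.le_zero.1 h]
  | succ n ih =>
    cases j with
    | zero => simp
    | succ j => exact Nat.add_pos_left (ih (by omega)) _

lemma mul_qFactorial (j a : ℕ) :
    qBinom b (j + a) j * (qFactorial b j * qFactorial b a) = qFactorial b (j + a) := by
  induction j generalizing a with
  | zero => simp [qFactorial]
  | succ j ihj =>
    induction a with
    | zero => simp [qFactorial]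
    | succ a iha =>
      have hj := ihj (a + 1)
      rw [← add_assoc, add_right_comm] at hj
      rw [← add_assoc, succ_succ, qFactorial_succ b (j + 1 + a), add_assoc (j + 1), qInt_add]
      rw [qFactorial_succ b a, qFactorial_succ b j] at *
      linear_combination qInt b (j + 1) * hj + b ^ (j + 1) * qInt b (a + 1) * iha

lemma symm_add (j a : ℕ) : qBinom b (j + a) a = qBinom b (j + a) j := by
  refine Nat.eq_of_mul_eq_mul_right
    (Nat.mul_pos (qFactorial_pos b j) (qFactorial_pos b a)) ?_
  rw [mul_qFactorial, mul_comm (qFactorial b j), add_comm, mul_qFactorial]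

lemma symm {n j : ℕ} (hj : j ≤ n) : qBinom b n (n - j) = qBinom b n j := by
  obtain ⟨a, rfl⟩ := Nat.exists_eq_add_of_le hj
  rw [Nat.add_sub_cancel_left, symm_add]

lemma succ_succ' (j a : ℕ) :
    qBinom b (j + a + 1) (j + 1) = b ^ a * qBinom b (j + a) j + qBinom b (j + a) (j + 1) := by
  cases a with
  | zero => simp [eq_zero_of_lt b j.lt_succ_self]
  | succ a =>
    have h₁ := symm_add b (j + 1) (a + 1)
    have h₂ := symm_add b (j + 1) a
    have h₃ := symm_add b j (a + 1)
    rw [show j + 1 + (a + 1) = j + (a + 1) + 1 by omega] at h₁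
    rw [show j + 1 + a = j + (a + 1) by omega] at h₂
    rw [← h₁, succ_succ, h₂, h₃, add_comm]

lemma mul_qInt (j a : ℕ) :
    qBinom b (j + a + 1) j * qInt b (a + 1) = qInt b (j + a + 1) * qBinom b (j + a) j := by
  refine Nat.eq_of_mul_eq_mul_right
    (Nat.mul_pos (qFactorial_pos b j) (qFactorial_pos b a)) ?_
  have h := mul_qFactorial b j (a + 1)
  rw [← add_assoc, qFactorial_succ, qFactorial_succ, ← mul_qFactorial b j a] at h
  linear_combination h

lemma succ_mul_qInt (n j : ℕ) :
    qBinom b (n + 1) (j + 1) * qInt b (j + 1) = qInt b (n + 1) * qBinom b n j := by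
  rcases lt_or_ge n j with h | h
  · simp [eq_zero_of_lt b h, eq_zero_of_lt b (Nat.succ_lt_succ h)]
  · obtain ⟨a, rfl⟩ := Nat.exists_eq_add_of_le' h
    have := mul_qInt b a j
    rwa [add_assoc a j 1, symm_add b a (j+1), symm_add]

lemma mul_mul_eq (i j k : ℕ) :
    qBinom b (i + j) i * qBinom b (i + j + k) (i + j)
      = qBinom b (i + j + k) i * qBinom b (j + k) j := by
  refine Nat.eq_of_mul_eq_mul_right (Nat.mul_pos (Nat.mul_pos (qFactorial_pos b i)
    (qFactorial_pos b j)) (Nat.mul_pos (qFactorial_pos b k) (qFactorial_pos b (j + k)))) ?_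
  have h₁ := mul_qFactorial b i (j + k)
  have h₂ := mul_qFactorial b j k
  rw [← add_assoc] at h₁
  linear_combination
    qBinom b (i + j + k) (i + j) * qFactorial b k * qFactorial b (j + k) * mul_qFactorial b i j
      + qFactorial b (j + k) * mul_qFactorial b (i + j) k + qFactorial b (j + k) * h₁.symm
      + qBinom b (i + j + k) i * qFactorial b i * qFactorial b (j + k) * h₂.symm

lemma trinomial (s l N : ℕ) :
    qBinom b (s + l) s * qBinom b (s + N) (s + l) = qBinom b (s + N) s * qBinom b N l := by
  rcases lt_or_ge N l with h | h
  · simp [eq_zero_of_lt b h, eq_zero_of_lt b (Nat.add_lt_add_left h s)]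
  · obtain ⟨k, rfl⟩ := Nat.exists_eq_add_of_le h
    rw [← add_assoc, mul_mul_eq]

section CommRing

variable {R : Type*} [CommRing R]

lemma alternating_sum (N : ℕ) :
    ∑ l ∈ range (N + 1), (-1 : R) ^ l * (b : R) ^ (l.choose 2) * qBinom b N l
      = if N = 0 then 1 else 0 := by
  cases N with
  | zero => simp
  | succ N =>
    have telescope : ∀ l ∈ range (N + 1),
        (-1 : R) ^ (l + 1) * (b : R) ^ ((l + 1).choose 2) * qBinom b (N + 1) (l + 1)
          = (-1 : R) ^ (l + 1) * (b : R) ^ ((l + 1 + 1).choose 2) * qBinom b N (l + 1)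
            - (-1 : R) ^ l * (b : R) ^ ((l + 1).choose 2) * qBinom b N l := fun l _ => by
      have hchoose : (l + 1 + 1).choose 2 = (l + 1) + (l + 1).choose 2 := by
        rw [Nat.choose_succ_succ', Nat.choose_one_right]
      rw [hchoose, succ_succ]
      push_cast
      ring
    rw [sum_range_succ', sum_congr rfl telescope,
      sum_range_sub (fun l => (-1 : R) ^ l * (b : R) ^ ((l + 1).choose 2) * qBinom b N l)]
    simp [eq_zero_of_lt b N.lt_succ_self]

lemma sum_inversion_kernel {N s u : ℕ} (hs : s ≤ N) (hu : u ≤ N) :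
    ∑ l ∈ range (N - s + 1),
        (-1 : R) ^ l * (b : R) ^ (l.choose 2) * qBinom b (s + l) s * qBinom b u (s + l)
      = if u = s then 1 else 0 := by
  rcases lt_or_ge u s with h | h
  · rw [if_neg h.ne]
    exact sum_eq_zero fun l _ => by simp [eq_zero_of_lt b (Nat.lt_add_right l h)]
  · obtain ⟨x, rfl⟩ := Nat.exists_eq_add_of_le h
    calc _ = ∑ l ∈ range (N - s + 1),
          qBinom b (s + x) s * ((-1 : R) ^ l * (b : R) ^ (l.choose 2) * qBinom b x l) :=
        sum_congr rfl fun l _ => by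
          have := congrArg (Nat.cast : ℕ → R) (trinomial b s l x)
          push_cast at this
          linear_combination (-1 : R) ^ l * (b : R) ^ (l.choose 2) * this
      _ = qBinom b (s + x) s
          * ∑ l ∈ range (x + 1), (-1 : R) ^ l * (b : R) ^ (l.choose 2) * qBinom b x l := by
        rw [← mul_sum]
        congr 1
        refine (sum_subset (range_subset_range.2 (by omega)) fun l _ hl => ?_).symm
        rw [eq_zero_of_lt b (by simpa using hl)]
        simp
      _ = _ := by
        rw [alternating_sum]
        by_cases hx : x = 0 <;> simp [hx]

lemma inversion {N : ℕ} {f g : ℕ → R}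
    (h : ∀ j ≤ N, ∑ s ∈ range (N + 1), (qBinom b s j : R) * f s = g j) {s : ℕ} (hs : s ≤ N) :
    f s = ∑ l ∈ range (N - s + 1),
      (-1 : R) ^ l * (b : R) ^ (l.choose 2) * qBinom b (s + l) s * g (s + l) :=
  calc f s = ∑ u ∈ range (N + 1), (if u = s then 1 else 0) * f u := by
        simp [Nat.lt_succ_of_le hs]
    _ = ∑ u ∈ range (N + 1), (∑ l ∈ range (N - s + 1),
          (-1 : R) ^ l * (b : R) ^ (l.choose 2) * qBinom b (s + l) s * qBinom b u (s + l))
            * f u :=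
      sum_congr rfl fun u hu => by
        rw [sum_inversion_kernel b hs (Nat.lt_succ_iff.1 (mem_range.1 hu))]
    _ = _ := by
      simp only [sum_mul]
      rw [sum_comm]
      refine sum_congr rfl fun l hl => ?_
      rw [← h (s + l) (by have := mem_range.1 hl; omega), mul_sum]
      exact sum_congr rfl fun u _ => mul_assoc _ _ _

lemma pascal_sub_mul_pow {n i : ℕ} (hi : i ≤ n) (j : ℕ) :
    ((qBinom b (n + 1 - i) (j + 1) : R) - qBinom b (n - i) (j + 1)) * (b : R) ^ i
      = (b : R) ^ (n - j) * qBinom b (n - i) j := by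
  rcases lt_or_ge (n - i) j with h | h
  · simp [eq_zero_of_lt b h, eq_zero_of_lt b (by omega : n + 1 - i < j + 1),
      eq_zero_of_lt b (by omega : n - i < j + 1)]
  · obtain ⟨a, rfl⟩ : ∃ a, n = i + (j + a) := ⟨n - i - j, by omega⟩
    rw [show i + (j + a) + 1 - i = j + a + 1 by omega, show i + (j + a) - i = j + a by omega,
      show i + (j + a) - j = i + a by omega, succ_succ']
    push_cast
    ring

lemma mul_sub_pow_add {n i : ℕ} (hi : i ≤ n) (j : ℕ) :
    (qBinom b (n - (i + 1)) j : R) * ((b : R) ^ n - (b : R) ^ i)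
        + qBinom b (n - i) j * (b : R) ^ i
      = (b : R) ^ (n - j) * qBinom b (n - i) j := by
  obtain ⟨y, rfl⟩ := Nat.exists_eq_add_of_le hi
  rw [Nat.add_sub_cancel_left, show i + y - (i + 1) = y - 1 by omega]
  rcases lt_trichotomy y j with h | rfl | h
  · simp [eq_zero_of_lt b h, eq_zero_of_lt b (by omega : y - 1 < j)]
  · cases y <;> simp [eq_zero_of_lt b (Nat.lt_succ_self _)]
  · obtain ⟨a, rfl⟩ := Nat.exists_eq_add_of_lt h
    have absorb := congrArg (fun y : ℕ => (y : R) * ((b : R) - 1)) (mul_qInt b j a)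
    rw [show i + (j + a + 1) - j = i + (a + 1) by omega, Nat.add_sub_cancel]
    push_cast at absorb
    linear_combination (b : R) ^ i * (qBinom b (j + a + 1) j * cast_qInt_mul b (R := R) (a + 1)
      - qBinom b (j + a) j * cast_qInt_mul b (R := R) (j + a + 1) - absorb)

lemma prod_pow_sub_pow (x k : ℕ) :
    (qBinom b x k : R) * ∏ i ∈ range k, ((b : R) ^ k - (b : R) ^ i)
      = ∏ i ∈ range k, ((b : R) ^ x - (b : R) ^ i) := by
  induction k generalizing x with
  | zero => simp
  | succ k ih =>
    have shift (y : ℕ) : ∏ i ∈ range (k + 1), ((b : R) ^ (y + 1) - (b : R) ^ i)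
        = (b : R) ^ k * ((b : R) ^ (y + 1) - 1) * ∏ i ∈ range k, ((b : R) ^ y - (b : R) ^ i) := by
      have factor (i : ℕ) :
          (b : R) ^ (y + 1) - (b : R) ^ (i + 1) = b * ((b : R) ^ y - (b : R) ^ i) := by
        ring
      simp only [prod_range_succ', factor, prod_mul_distrib, prod_const, card_range, pow_zero]
      ring
    cases x with
    | zero => simp [prod_range_succ', eq_zero_of_lt]
    | succ x =>
      have h := congrArg (fun y : ℕ => (y : R) * ((b : R) - 1)) (succ_mul_qInt b x k)
      push_cast at h
      rw [shift, shift, ← ih x]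
      linear_combination ((b : R) ^ k * ∏ i ∈ range k, ((b : R) ^ k - (b : R) ^ i)) *
        (h - qBinom b (x + 1) (k + 1) * cast_qInt_mul b (R := R) (k + 1)
          + qBinom b x k * cast_qInt_mul b (R := R) (x + 1))

lemma eq_sum_of_moments {n d : ℕ} (hd : 1 ≤ d) (hdn : d ≤ n) (Q : R) {w : ℕ → R}
    (w_zero : w 0 = 1) (w_eq_zero : ∀ i, 1 ≤ i → i < d → w i = 0)
    (moments : ∀ j ≤ n - d, ∑ i ∈ range (n + 1), (qBinom b (n - i) j : R) * w i
      = Q ^ (n - d + 1 - j) * qBinom b n j) {r : ℕ} (hr : r ≤ n - d) :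
    w (d + r) = ∑ i ∈ range (r + 1), (-1 : R) ^ (r - i) * (b : R) ^ ((r - i).choose 2)
      * qBinom b (d + r) (d + i) * qBinom b n (d + r) * (Q ^ (i + 1) - 1) := by
  have nontrivial_moments : ∀ j ≤ n - d, ∑ s ∈ range (n - d + 1), (qBinom b s j : R) * w (n - s)
      = qBinom b n j * (Q ^ (n - d + 1 - j) - 1) := fun j hj => by
    have h := moments j hj
    rw [← sum_range_reflect, sum_congr rfl fun s hs => by
      rw [show n - (n + 1 - 1 - s) = s by have := mem_range.1 hs; omega], Nat.add_sub_cancel,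
      sum_range_succ, Nat.sub_self, w_zero,
      ← sum_subset (range_subset_range.2 (by omega : n - d + 1 ≤ n)) fun s hs hs' => by
        rw [mem_range] at hs hs'
        rw [w_eq_zero _ (by omega) (by omega), mul_zero]] at h
    linear_combination h
  have h := inversion b nontrivial_moments (s := n - d - r) (by omega)
  rw [show n - (n - d - r) = d + r by omega, show n - d - (n - d - r) = r by omega,
    ← sum_range_reflect] at h
  refine h.trans (sum_congr rfl fun i hi => ?_)
  have hir : i ≤ r := Nat.lt_succ_iff.1 (mem_range.1 hi)
  have middle := congrArg (Nat.cast : ℕ → R) (mul_mul_eq b (n - d - r) (r - i) (d + i))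
  rw [show n - d - r + (r - i) + (d + i) = n by omega, show r - i + (d + i) = d + r by omega,
    ← symm b (by omega : n - d - r ≤ n), show n - (n - d - r) = d + r by omega,
    ← symm b (by omega : r - i ≤ d + r), show d + r - (r - i) = d + i by omega] at middle
  push_cast at middle
  rw [show r + 1 - 1 - i = r - i by omega,
    show n - d + 1 - (n - d - r + (r - i)) = i + 1 by omega]
  linear_combination
    (-1 : R) ^ (r - i) * (b : R) ^ ((r - i).choose 2) * (Q ^ (i + 1) - 1) * middle

end CommRing

lemma sum_eq_iff {α : Type*} [Fintype α] (n j : ℕ) (h : α → ℕ) :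
    ∑ x, qBinom b (n - h x) j = Nat.card {x // h x = 0} * qBinom b n j
      ↔ ∀ x, h x ≠ 0 → n - h x < j := by
  classical
  have hsplit := sum_filter_add_sum_filter_not univ (fun x => h x = 0)
    fun x => qBinom b (n - h x) j
  have hzero : ∑ x with h x = 0, qBinom b (n - h x) j
      = Nat.card {x // h x = 0} * qBinom b n j := by
    rw [sum_congr rfl (g := fun _ => qBinom b n j) fun x hx => by
      rw [(mem_filter.1 hx).2, Nat.sub_zero], sum_const, smul_eq_mul, Nat.card_eq_fintype_card,
      Fintype.card_subtype]
  rw [← hsplit, hzero, Nat.add_eq_left, sum_eq_zero_iff]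
  simp only [mem_filter, mem_univ, true_and]
  exact forall₂_congr fun x _ =>
    ⟨fun hx => not_le.1 fun hle => (pos b hle).ne' hx, eq_zero_of_lt b⟩

end qBinom

lemma gaussQ_natCast {q : ℕ} (hq : 1 < q) (x k : ℕ) : gaussQ q x k = qBinom (q ^ 2) x k := by
  have hpow (a : ℕ) : (q : ℝ) ^ (2 * (a : ℝ)) = ((q ^ 2 : ℕ) : ℝ) ^ a := by
    rw [← Nat.cast_two, ← Nat.cast_mul, Real.rpow_natCast, pow_mul, Nat.cast_pow]
  have hden : ∏ i ∈ range k, (((q ^ 2 : ℕ) : ℝ) ^ k - ((q ^ 2 : ℕ) : ℝ) ^ i) ≠ 0 :=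
    prod_ne_zero_iff.2 fun i hi => sub_ne_zero.2 <| ne_of_gt <|
      pow_lt_pow_right₀ (by exact_mod_cast Nat.one_lt_pow two_ne_zero hq) (mem_range.1 hi)
  simp only [gaussQ, hpow]
  rw [prod_div_distrib, ← qBinom.prod_pow_sub_pow, mul_div_cancel_right₀ _ hden]

open Matrix

/-! ### Alternating matrices -/

/-- The space of alternating matrices with rows and columns indexed by `ι`. -/
def altMatrix (F ι : Type*) [Field F] : Submodule F (Matrix ι ι F) where
  carrier := {A | Aᵀ = -A ∧ ∀ i, A i i = 0}
  zero_mem' := by simp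
  add_mem' := by
    rintro A B ⟨hA, hA'⟩ ⟨hB, hB'⟩
    exact ⟨by rw [transpose_add, hA, hB, neg_add], fun i => by simp [hA', hB']⟩
  smul_mem' := by
    rintro c A ⟨hA, hA'⟩
    exact ⟨by rw [transpose_smul, hA, smul_neg], fun i => by simp [hA']⟩

namespace altMatrix

section Congruence

variable {F : Type*} [Field F] {ι κ : Type*} {A : Matrix ι ι F}

lemma apply_swap (hA : A ∈ altMatrix F ι) (i j : ι) : A i j = -A j i := by
  simpa using congrFun₂ hA.1 j i

lemma sub_transpose_mem (M : Matrix ι ι F) : M - Mᵀ ∈ altMatrix F ι :=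
  ⟨by simp, by simp⟩

lemma submatrix_mem (hA : A ∈ altMatrix F ι) (f : κ → ι) : A.submatrix f f ∈ altMatrix F κ :=
  ⟨by rw [transpose_submatrix, hA.1, submatrix_neg]; rfl, fun i => hA.2 (f i)⟩

variable [Fintype ι]

lemma dotProduct_mulVec_self (hA : A ∈ altMatrix F ι) (x : ι → F) : x ⬝ᵥ (A *ᵥ x) = 0 := by
  classical
  simp only [dotProduct, mulVec, mul_sum]
  rw [← sum_product']
  refine sum_involution (fun p _ => p.swap) ?_ ?_ (fun _ _ => mem_univ _) (fun p _ => p.swap_swap)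
  · intro p _
    simp only [Prod.fst_swap, Prod.snd_swap, apply_swap hA p.2 p.1]
    ring
  · rintro ⟨i, j⟩ _ hij heq
    obtain rfl : j = i := congrArg Prod.fst heq
    simp [hA.2] at hij

lemma congr_mem (hA : A ∈ altMatrix F ι) (G : Matrix κ ι F) : G * A * Gᵀ ∈ altMatrix F κ :=
  ⟨by simp [transpose_mul, hA.1, Matrix.mul_assoc], fun i => by
    rw [Matrix.mul_assoc]
    exact dotProduct_mulVec_self hA (G i)⟩

end Congruence

section Border

variable {F : Type*} [Field F] {κ : Type*}

/-- The extension of `A` by a first column `a`, a first row `-a` and a zero corner. -/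
def border (a : κ → F) (A : Matrix κ κ F) : Matrix (Unit ⊕ κ) (Unit ⊕ κ) F :=
  fromBlocks 0 (-replicateRow Unit a) (replicateCol Unit a) A

/-- The vector by which `M - Mᵀ` borders its lower right block. -/
def borderVec (M : Matrix (Unit ⊕ κ) (Unit ⊕ κ) F) : κ → F :=
  fun i => M (Sum.inr i) (Sum.inl ()) - M (Sum.inl ()) (Sum.inr i)

lemma border_mem {A : Matrix κ κ F} (hA : A ∈ altMatrix F κ) (a : κ → F) :
    border a A ∈ altMatrix F (Unit ⊕ κ) := by
  refine ⟨?_, ?_⟩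
  · rw [border, fromBlocks_transpose, fromBlocks_neg, hA.1]
    simp
  · rintro (_ | i) <;> simp [border, hA.2]

lemma border_injective {a a' : κ → F} {A A' : Matrix κ κ F} (h : border a A = border a' A') :
    a = a' ∧ A = A' := by
  obtain ⟨-, -, hcol, hA⟩ := fromBlocks_inj.1 h
  exact ⟨replicateCol_injective hcol, hA⟩

lemma sub_transpose_eq_border (M : Matrix (Unit ⊕ κ) (Unit ⊕ κ) F) :
    M - Mᵀ = border (borderVec M) (M.toBlocks₂₂ - M.toBlocks₂₂ᵀ) := by
  ext (_ | i) (_ | j) <;> simp [border, borderVec, toBlocks₂₂]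

/-- Splitting off the first row and column of an alternating matrix. -/
def borderEquiv (F κ : Type*) [Field F] :
    altMatrix F κ × (κ → F) ≃ altMatrix F (Unit ⊕ κ) where
  toFun p := ⟨border p.2 p.1, border_mem p.1.2 p.2⟩
  invFun B := (⟨B.1.toBlocks₂₂, submatrix_mem B.2 Sum.inr⟩, fun i => B.1 (Sum.inr i) (Sum.inl ()))
  left_inv p := by ext <;> simp [border]
  right_inv B := by
    ext (_ | i) (_ | j)
    · simp [border, B.2.2]
    · simp [border, apply_swap B.2 (Sum.inl ())]
    · simp [border]
    · simp [border, toBlocks₂₂]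

@[simp] lemma coe_borderEquiv (p : altMatrix F κ × (κ → F)) :
    (borderEquiv F κ p : Matrix (Unit ⊕ κ) (Unit ⊕ κ) F) = border p.2 p.1 := rfl

variable [Fintype κ]

lemma range_mulVecLin_fromCols {m : Type*} (A : Matrix m κ F) (a : m → F) :
    LinearMap.range (fromCols (replicateCol Unit a) A).mulVecLin
      = LinearMap.range A.mulVecLin ⊔ Submodule.span F {a} := by
  rw [range_mulVecLin, range_mulVecLin, ← Submodule.span_union]
  congr 1
  ext v
  simp only [Set.mem_range, Sum.exists, Set.mem_union, Set.mem_singleton_iff]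
  constructor
  · rintro (⟨_, rfl⟩ | ⟨k, rfl⟩)
    exacts [Or.inr rfl, Or.inl ⟨k, rfl⟩]
  · rintro (⟨k, rfl⟩ | rfl)
    exacts [Or.inr ⟨k, rfl⟩, Or.inl ⟨(), rfl⟩]

open Classical in
lemma rank_fromCols {m : Type*} [Finite m] (A : Matrix m κ F) (a : m → F) :
    (fromCols (replicateCol Unit a) A).rank
      = if a ∈ LinearMap.range A.mulVecLin then A.rank else A.rank + 1 := by
  rw [Matrix.rank, Matrix.rank, range_mulVecLin_fromCols]
  split_ifs with h
  · rw [sup_eq_left.2 ((Submodule.span_singleton_le_iff_mem _ _).2 h)]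
  · exact Submodule.finrank_sup_span_singleton h

open Classical in
lemma rank_border {A : Matrix κ κ F} (hA : A ∈ altMatrix F κ) (a : κ → F) :
    (border a A).rank = if a ∈ LinearMap.range A.mulVecLin then A.rank else A.rank + 2 := by
  have border_transpose : (border a A)ᵀ
      = fromCols (replicateCol Unit (Sum.elim (fun _ : Unit => (0 : F)) (-a)))
          (fromCols (replicateCol Unit a) A)ᵀ := by
    ext (_ | i) (_ | j) <;> simp [border]
  -- The corner imposes no condition: `A *ᵥ y = a` implies `a ⬝ᵥ y = 0`.
  have row_mem_iff : Sum.elim (fun _ : Unit => (0 : F)) (-a)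
        ∈ LinearMap.range ((fromCols (replicateCol Unit a) A)ᵀ).mulVecLin
      ↔ a ∈ LinearMap.range A.mulVecLin := by
    simp only [LinearMap.mem_range, mulVecLin_apply]
    refine exists_congr fun y => ?_
    rw [transpose_fromCols, hA.1, fromRows_mulVec]
    constructor
    · intro h
      ext i
      simpa [neg_mulVec] using congrFun h (Sum.inr i)
    · intro h
      have orthogonal := dotProduct_mulVec_self hA y
      rw [h] at orthogonal
      ext (_ | i)
      · simpa [mulVec, dotProduct_comm] using orthogonal
      · simp [neg_mulVec, h]
  rw [← rank_transpose, border_transpose, rank_fromCols, rank_transpose, rank_fromCols]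
  simp only [row_mem_iff]
  split_ifs <;> rfl

lemma even_rank {ι : Type*} [Fintype ι] {A : Matrix ι ι F} (hA : A ∈ altMatrix F ι) :
    Even A.rank := by
  classical
  refine Finite.induction_empty_option
    (P := fun ι => ∀ [Fintype ι] {A : Matrix ι ι F}, A ∈ altMatrix F ι → Even A.rank)
    ?_ ?_ ?_ ι hA
  · intro α β e ih _ A hA
    have := Fintype.ofEquiv β e.symm
    rw [← rank_submatrix A e e]
    exact ih (submatrix_mem hA e)
  · intro _ A _
    rw [Subsingleton.elim A 0, rank_zero]
    exact Even.zero
  · intro α _ ih _ A hA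
    let e : Unit ⊕ α ≃ Option α := (Equiv.sumComm _ _).trans (Equiv.optionEquivSumPUnit α).symm
    obtain ⟨⟨B, a⟩, hB⟩ := (borderEquiv F α).surjective ⟨_, submatrix_mem hA e⟩
    replace hB : border a B.1 = A.submatrix e e := congrArg Subtype.val hB
    rw [← rank_submatrix A e e, ← hB, rank_border B.2]
    split_ifs
    · exact ih B.2
    · exact (ih B.2).add even_two

/-- The weight `i` of an alternating matrix, whose rank is `2 * i`. -/
noncomputable def halfRank {ι : Type*} [Fintype ι] (A : Matrix ι ι F) : ℕ := A.rank / 2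

lemma two_mul_halfRank {ι : Type*} [Fintype ι] {A : Matrix ι ι F} (hA : A ∈ altMatrix F ι) :
    2 * halfRank A = A.rank :=
  Nat.two_mul_div_two_of_even (even_rank hA)

lemma halfRank_le {t : ℕ} (A : Matrix (Fin t) (Fin t) F) : halfRank A ≤ t / 2 :=
  Nat.div_le_div_right A.rank_le_width

@[simp] lemma halfRank_zero {ι : Type*} [Fintype ι] : halfRank (0 : Matrix ι ι F) = 0 := by
  simp [halfRank]

lemma halfRank_eq_zero_iff {ι : Type*} [Fintype ι] {A : Matrix ι ι F} (hA : A ∈ altMatrix F ι) :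
    halfRank A = 0 ↔ A = 0 := by
  classical
  refine ⟨fun h => ?_, fun h => h ▸ halfRank_zero⟩
  have hrank := two_mul_halfRank hA
  rw [h, Matrix.rank, eq_comm, mul_zero, Submodule.finrank_eq_zero, LinearMap.range_eq_bot,
    ← toLin'_apply'] at hrank
  exact toLin'.map_eq_zero_iff.1 hrank

open Classical in
lemma halfRank_border {A : Matrix κ κ F} (hA : A ∈ altMatrix F κ) (a : κ → F) :
    halfRank (border a A)
      = if a ∈ LinearMap.range A.mulVecLin then halfRank A else halfRank A + 1 := by
  rw [halfRank, rank_border hA]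
  split_ifs
  · rfl
  · exact Nat.add_div_right _ two_pos

lemma halfRank_border_zero {A : Matrix κ κ F} (hA : A ∈ altMatrix F κ) :
    halfRank (border 0 A) = halfRank A := by
  rw [halfRank_border hA, if_pos (Submodule.zero_mem _)]

lemma border_mulVec_single {h : F} (h0 : h ≠ 0) (a : κ → F) (A : Matrix κ κ F) :
    border a A *ᵥ Sum.elim (fun _ => h) 0 = 0 ↔ a = 0 := by
  constructor
  · intro ha
    ext k
    simpa [border, fromBlocks_mulVec, mulVec, dotProduct, h0] using congrFun ha (Sum.inr k)
  · rintro rfl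
    ext (_ | k) <;> simp [border, mulVec, dotProduct]

lemma halfRank_hyperbolic {D : Matrix κ κ F} (hD : D ∈ altMatrix F κ) {h : F} (h0 : h ≠ 0) :
    halfRank (border (Sum.elim (fun _ => h) 0) (border 0 D)) = halfRank D + 1 := by
  rw [halfRank_border (border_mem hD 0), if_neg, halfRank_border_zero hD]
  rintro ⟨x, hx⟩
  refine h0 ?_
  simpa [border, mulVec, dotProduct] using (congrFun hx (Sum.inl ())).symm

end Border

section Hyperbolic

variable {F : Type*} [Field F]

lemma exists_congr_eq_fromBlocks {α κ : Type*} [Fintype α] [Fintype κ] [DecidableEq α]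
    [DecidableEq κ] {X : Matrix (α ⊕ κ) (α ⊕ κ) F} (hX : X ∈ altMatrix F (α ⊕ κ))
    [Invertible X.toBlocks₁₁] :
    ∃ (G : Matrix (α ⊕ κ) (α ⊕ κ) F) (D : Matrix κ κ F),
      IsUnit G.det ∧ Gᵀ * X * G = fromBlocks X.toBlocks₁₁ 0 0 D := by
  set A := X.toBlocks₁₁
  set B := X.toBlocks₁₂
  set C := X.toBlocks₂₁
  have hA : Aᵀ = -A := (submatrix_mem hX Sum.inl).1
  have hC : C = -Bᵀ := by ext i j; exact apply_swap hX _ _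
  have hinv : (⅟A)ᵀ = -⅟A := by
    refine neg_eq_iff_eq_neg.1 (invOf_eq_right_inv ?_).symm
    rw [Matrix.mul_neg, ← Matrix.neg_mul, ← hA, ← transpose_mul, invOf_mul_self, transpose_one]
  let L : Matrix (α ⊕ κ) (α ⊕ κ) F := fromBlocks 1 (⅟A * B) 0 1
  let G : Matrix (α ⊕ κ) (α ⊕ κ) F := fromBlocks 1 (-(⅟A * B)) 0 1
  have hLG : L * G = 1 := by simp [L, G, fromBlocks_multiply]
  have hLt : fromBlocks 1 0 (C * ⅟A) 1 = Lᵀ := by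
    rw [fromBlocks_transpose, transpose_mul, hinv, hC, Matrix.neg_mul, Matrix.mul_neg,
      transpose_one, transpose_one, transpose_zero]
  have hL : X = Lᵀ * fromBlocks A 0 0 (X.toBlocks₂₂ - C * ⅟A * B) * L := by
    rw [← hLt, ← fromBlocks_eq_of_invertible₁₁, fromBlocks_toBlocks]
  have hGL : Gᵀ * Lᵀ = 1 := by rw [← transpose_mul, hLG, transpose_one]
  refine ⟨G, X.toBlocks₂₂ - C * ⅟A * B, by simp [G], ?_⟩
  calc Gᵀ * X * G
      = (Gᵀ * Lᵀ) * fromBlocks A 0 0 (X.toBlocks₂₂ - C * ⅟A * B) * (L * G) := by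
        conv_lhs => rw [hL]
        simp only [Matrix.mul_assoc]
    _ = _ := by rw [hGL, hLG, Matrix.one_mul, Matrix.mul_one]

lemma exists_congr_eq_border {κ : Type*} [Fintype κ] [DecidableEq κ]
    {X : Matrix (Unit ⊕ (Unit ⊕ κ)) (Unit ⊕ (Unit ⊕ κ)) F} (hX : X ∈ altMatrix F _)
    (h0 : X (Sum.inr (Sum.inl ())) (Sum.inl ()) ≠ 0) :
    ∃ (G : Matrix (Unit ⊕ (Unit ⊕ κ)) (Unit ⊕ (Unit ⊕ κ)) F) (h : F) (D : Matrix κ κ F),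
      IsUnit G.det ∧ h ≠ 0 ∧ Gᵀ * X * G = border (Sum.elim (fun _ => h) 0) (border 0 D) := by
  set h := X (Sum.inr (Sum.inl ())) (Sum.inl ()) with hh
  let σ := Equiv.sumAssoc Unit Unit κ
  let Y := X.submatrix σ σ
  have hY : Y.toBlocks₁₁ = border (fun _ => h) 0 := by
    ext (_ | _) (_ | _) <;>
      simp [Y, σ, border, toBlocks₁₁, hX.2, hh, ← apply_swap hX (Sum.inl ()) (Sum.inr (Sum.inl ()))]
  have : Invertible Y.toBlocks₁₁ := invertibleOfRightInverse _ (border (fun _ => -h⁻¹) 0) <| by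
    rw [hY]
    ext (_ | _) (_ | _) <;> simp [border, Matrix.mul_apply, h0]
  obtain ⟨G, D, hG, hGY⟩ := exists_congr_eq_fromBlocks (submatrix_mem hX σ)
  refine ⟨G.submatrix σ.symm σ.symm, h, D, by rwa [det_submatrix_equiv_self], h0, ?_⟩
  have hXY : X = Y.submatrix σ.symm σ.symm := by simp [Y]
  rw [hXY, transpose_submatrix, submatrix_mul_equiv, submatrix_mul_equiv, hGY, hY]
  ext (_ | _ | i) (_ | _ | j) <;> simp [σ, border]

lemma exists_reindex_congr_eq_border {t : ℕ} {B : Matrix (Fin t) (Fin t) F}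
    (hB : B ∈ altMatrix F (Fin t)) (h0 : B ≠ 0) :
    ∃ s, t = s + 2 ∧ ∃ (e : Unit ⊕ (Unit ⊕ Fin s) ≃ Fin t)
      (G : Matrix (Unit ⊕ (Unit ⊕ Fin s)) (Unit ⊕ (Unit ⊕ Fin s)) F) (h : F)
      (D : Matrix (Fin s) (Fin s) F), IsUnit G.det ∧ h ≠ 0 ∧
      Gᵀ * B.submatrix e e * G = border (Sum.elim (fun _ => h) 0) (border 0 D) := by
  obtain ⟨i, j, hij⟩ : ∃ i j, B i j ≠ 0 := by
    by_contra! h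
    exact h0 (Matrix.ext h)
  have hne : j ≠ i := fun h => hij (h ▸ hB.2 j)
  have card_pos : 1 < Fintype.card (Fin t) := Fintype.one_lt_card_iff.2 ⟨j, i, hne⟩
  obtain ⟨s, rfl⟩ := Nat.exists_eq_add_of_le' (Fintype.card_fin t ▸ card_pos : 2 ≤ t)
  let e₀ : Unit ⊕ (Unit ⊕ Fin s) ≃ Fin (s + 2) := Fintype.equivOfCardEq (by simp; omega)
  obtain ⟨g, hgj, hgi⟩ := MulAction.is_two_pretransitive_iff.1
    (Equiv.Perm.isMultiplyPretransitive (Fin (s + 2)) 2)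
    (e₀.injective.ne Sum.inl_ne_inr : e₀ (Sum.inl ()) ≠ e₀ (Sum.inr (Sum.inl ()))) hne
  refine ⟨s, rfl, e₀.trans g, exists_congr_eq_border (submatrix_mem hB _) ?_⟩
  rwa [submatrix_apply, Equiv.trans_apply, Equiv.trans_apply, ← Equiv.Perm.smul_def,
    ← Equiv.Perm.smul_def, hgj, hgi]

end Hyperbolic

/-! ### The Fourier transform of a rank function -/

section Pairing

variable {F : Type*} [Field F] {ι κ : Type*} [Fintype ι] [Fintype κ]

/-- The trace form, on all square matrices rather than on `altMatrix F ι`, where it vanishes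
identically in characteristic two. As a functional on alternating matrices, `M` depends only on
`M - Mᵀ`, which plays the part of the alternating matrix in the paper's dual. -/
def pairing (F ι : Type*) [Field F] [Fintype ι] : LinearMap.BilinForm F (Matrix ι ι F) :=
  LinearMap.mk₂ F (fun A M => (Aᵀ * M).trace)
    (fun A B M => by simp [Matrix.add_mul]) (fun c A M => by simp)
    (fun A M N => by simp [Matrix.mul_add]) (fun c A M => by simp)

lemma pairing_apply (A M : Matrix ι ι F) : pairing F ι A M = (Aᵀ * M).trace := rfl

lemma pairing_isSymm : (pairing F ι).IsSymm :=
  ⟨fun A M => by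
    simp only [pairing_apply]
    rw [← trace_transpose (Aᵀ * M), transpose_mul, transpose_transpose]⟩

lemma pairing_nondegenerate : (pairing F ι).Nondegenerate := by
  have separatingRight : (pairing F ι).SeparatingRight := fun M hM =>
    ext_iff_trace_mul_left.2 fun A => by simpa [pairing_apply] using hM Aᵀ
  exact ⟨fun M hM => separatingRight M fun A => by rw [pairing_isSymm.eq, hM], separatingRight⟩

lemma pairing_submatrix (A M : Matrix ι ι F) (e : κ ≃ ι) :
    pairing F κ (A.submatrix e e) (M.submatrix e e) = pairing F ι A M := by
  rw [pairing_apply, transpose_submatrix, submatrix_mul_equiv, pairing_apply]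
  exact e.sum_comp fun i => (Aᵀ * M) i i

lemma pairing_congr (A M G : Matrix ι ι F) :
    pairing F ι (G * A * Gᵀ) M = pairing F ι A (Gᵀ * M * G) := by
  simp only [pairing_apply, transpose_mul, transpose_transpose, ← Matrix.mul_assoc]
  rw [Matrix.mul_assoc, Matrix.mul_assoc, trace_mul_comm]
  simp only [Matrix.mul_assoc]

lemma pairing_border (A : Matrix κ κ F) (a : κ → F) (M : Matrix (Unit ⊕ κ) (Unit ⊕ κ) F) :
    pairing F (Unit ⊕ κ) (border a A) M = pairing F κ A M.toBlocks₂₂ + a ⬝ᵥ borderVec M := by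
  simp [pairing_apply, border, trace, Matrix.mul_apply, dotProduct, borderVec, toBlocks₂₂,
    mul_sub, sum_add_distrib]
  ring

/-- The dual of a code for the trace form on all square matrices. -/
def traceDual (C : Submodule F (Matrix ι ι F)) : Submodule F (Matrix ι ι F) :=
  (pairing F ι).orthogonal C

lemma mem_iff_forall_traceDual {C : Submodule F (Matrix ι ι F)} {A : Matrix ι ι F} :
    A ∈ C ↔ ∀ M ∈ traceDual C, pairing F ι A M = 0 := by
  conv_lhs => rw [← LinearMap.BilinForm.orthogonal_orthogonal pairing_nondegenerate
    pairing_isSymm.isRefl C]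
  exact forall₂_congr fun M _ => by rw [pairing_isSymm.eq]

end Pairing

section CharacterSum

variable {F : Type*} [Field F] {R : Type*} [CommRing R] [IsDomain R] {χ : AddChar F R}

open Classical in
lemma sum_char (hχ : χ ≠ 1) {W : Type*} [AddCommGroup W] [Module F W] [Fintype W]
    (l : W →ₗ[F] F) : ∑ w, χ (l w) = if l = 0 then (Nat.card W : R) else 0 := by
  split_ifs with hl
  · simp [hl]
  · obtain ⟨w, hw⟩ := DFunLike.ne_iff.1 hl
    obtain ⟨x, hx⟩ := AddChar.ne_one_iff.1 hχ
    refine AddChar.sum_eq_zero_of_ne_one (ψ := χ.compAddMonoidHom l.toAddMonoidHom)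
      (AddChar.ne_one_iff.2 ⟨(x / l w) • w, ?_⟩)
    rw [LinearMap.zero_apply] at hw
    simpa [hw] using hx

variable [Fintype F] {κ : Type*} [Fintype κ]

local notation "q" => Fintype.card F

open Classical in
lemma sum_char_dotProduct (hχ : χ ≠ 1) (β : κ → F) :
    ∑ a : κ → F, χ (a ⬝ᵥ β) = if β = 0 then (q : R) ^ Fintype.card κ else 0 := by
  have hβ : (dotProductBilin F F).flip β = 0 ↔ β = 0 := by
    simp only [LinearMap.ext_iff, LinearMap.flip_apply, dotProductBilin_apply_apply,
      LinearMap.zero_apply, ← dotProduct_eq_zero_iff, dotProduct_comm _ β]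
  simpa [hβ] using sum_char hχ ((dotProductBilin F F).flip β)

open Classical in
lemma sum_char_range (hχ : χ ≠ 1) {A : Matrix κ κ F} (hA : A ∈ altMatrix F κ) (β : κ → F) :
    ∑ a with a ∈ LinearMap.range A.mulVecLin, χ (a ⬝ᵥ β)
      = if A *ᵥ β = 0 then ((q ^ 2 : ℕ) : R) ^ halfRank A else 0 := by
  let l := (dotProductBilin F F).flip β ∘ₗ (LinearMap.range A.mulVecLin).subtype
  have dotProduct_swap (x : κ → F) : A *ᵥ x ⬝ᵥ β = -(A *ᵥ β ⬝ᵥ x) := by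
    rw [dotProduct_comm, dotProduct_mulVec, ← mulVec_transpose, hA.1, neg_mulVec, neg_dotProduct]
  have hl : l = 0 ↔ A *ᵥ β = 0 := by
    simp [l, LinearMap.ext_iff, dotProduct_swap, dotProduct_eq_zero_iff]
  have hcard : Nat.card (LinearMap.range A.mulVecLin) = (q ^ 2) ^ halfRank A := by
    rw [Module.natCard_eq_pow_finrank (K := F), Nat.card_eq_fintype_card, ← pow_mul,
      two_mul_halfRank hA, Matrix.rank]
  rw [sum_subtype (p := (· ∈ LinearMap.range A.mulVecLin)) _ (by simp)]
  refine (sum_char hχ l).trans ?_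
  simp only [hl, hcard, Nat.cast_pow]

open Classical in
lemma sum_border (hχ : χ ≠ 1) (φ : ℕ → R) {A : Matrix κ κ F} (hA : A ∈ altMatrix F κ)
    (β : κ → F) :
    ∑ a : κ → F, χ (a ⬝ᵥ β) * φ (halfRank (border a A))
      = φ (halfRank A + 1) * (if β = 0 then (q : R) ^ Fintype.card κ else 0)
        + (φ (halfRank A) - φ (halfRank A + 1))
          * (if A *ᵥ β = 0 then ((q ^ 2 : ℕ) : R) ^ halfRank A else 0) := by
  rw [← sum_char_dotProduct hχ, ← sum_char_range hχ hA, sum_filter, mul_sum, mul_sum,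
    ← sum_add_distrib]
  refine sum_congr rfl fun a _ => ?_
  rw [halfRank_border hA]
  split_ifs <;> ring

end CharacterSum

section AltSum

variable {F : Type*} [Field F] [Fintype F] {ι κ : Type*} [Fintype ι] [Fintype κ]

local notation "q" => Fintype.card F

noncomputable local instance (W : Submodule F (Matrix ι ι F)) : Fintype W := Fintype.ofFinite W

section CommRing

variable {R : Type*} [CommRing R] {χ : AddChar F R}

/-- The Fourier transform at `M`, with respect to the character `χ` of `F`, of the function
`A ↦ φ (halfRank A)` on alternating matrices. -/
noncomputable def altSum (χ : AddChar F R) (φ : ℕ → R) (M : Matrix ι ι F) : R :=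
  ∑ A : altMatrix F ι, χ (pairing F ι A M) * φ (halfRank A.1)

lemma altSum_add (φ ψ : ℕ → R) (M : Matrix ι ι F) :
    altSum χ (fun i => φ i + ψ i) M = altSum χ φ M + altSum χ ψ M := by
  simp only [altSum, mul_add, sum_add_distrib]

lemma altSum_const_mul (a : R) (φ : ℕ → R) (M : Matrix ι ι F) :
    altSum χ (fun i => a * φ i) M = a * altSum χ φ M := by
  simp only [altSum, mul_left_comm _ a, mul_sum]

lemma altSum_congr_left {t : ℕ} {φ ψ : ℕ → R} (M : Matrix (Fin t) (Fin t) F)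
    (h : ∀ i ≤ t / 2, φ i = ψ i) : altSum χ φ M = altSum χ ψ M :=
  sum_congr rfl fun A _ => by rw [h _ (halfRank_le A.1)]

lemma altSum_submatrix (φ : ℕ → R) (M : Matrix ι ι F) (e : κ ≃ ι) :
    altSum χ φ (M.submatrix e e) = altSum χ φ M := by
  refine (Fintype.sum_equiv (Equiv.subtypeEquiv (reindex e.symm e.symm) fun A =>
    ⟨fun hA => submatrix_mem hA e, fun hA => ?_⟩) _ _ fun A => ?_).symm
  · simpa using submatrix_mem hA e.symm
  · have hpair := pairing_submatrix A.1 M e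
    have hrank : halfRank (A.1.submatrix e e) = halfRank A.1 := by
      rw [halfRank, rank_submatrix, halfRank]
    simp only [Equiv.subtypeEquiv_apply, reindex_apply, Equiv.symm_symm, hpair, hrank]

lemma altSum_transpose_mul_mul [DecidableEq ι] (φ : ℕ → R) (M : Matrix ι ι F)
    {G : Matrix ι ι F} (hG : IsUnit G.det) : altSum χ φ (Gᵀ * M * G) = altSum χ φ M := by
  have hGt : IsUnit Gᵀ.det := by rwa [det_transpose]
  have hbij : Function.Bijective fun A : altMatrix F ι =>
      (⟨G * A.1 * Gᵀ, congr_mem A.2 G⟩ : altMatrix F ι) := by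
    refine Finite.injective_iff_bijective.1 fun A B hAB => Subtype.ext ?_
    have h : G * A.1 * Gᵀ = G * B.1 * Gᵀ := congrArg Subtype.val hAB
    exact ((isUnit_iff_isUnit_det G).2 hG).mul_left_cancel
      (((isUnit_iff_isUnit_det Gᵀ).2 hGt).mul_right_cancel h)
  refine Fintype.sum_bijective _ hbij _ _ fun A => ?_
  rw [pairing_congr, halfRank, halfRank, rank_mul_eq_left_of_isUnit_det _ _ hGt,
    rank_mul_eq_right_of_isUnit_det _ _ hG]

open Classical in
lemma altSum_border (φ : ℕ → R) (M : Matrix (Unit ⊕ κ) (Unit ⊕ κ) F) :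
    altSum χ φ M = ∑ A : altMatrix F κ, χ (pairing F κ A M.toBlocks₂₂) *
      ∑ a : κ → F, χ (a ⬝ᵥ borderVec M) * φ (halfRank (border a A.1)) := by
  rw [altSum, ← (borderEquiv F κ).sum_comp, Fintype.sum_prod_type]
  simp only [coe_borderEquiv, pairing_border, AddChar.map_add_eq_mul, mul_assoc, mul_sum]

lemma altSum_qBinom_even_add_one {n : ℕ} {N : Matrix (Fin (2 * n)) (Fin (2 * n)) F} {j : ℕ}
    (ih : altSum χ (fun i => (qBinom (q ^ 2) (n - i) j : R)) N
      = (q : R) ^ ((2 * n - 1) * (n - j)) * qBinom (q ^ 2) n j) :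
    altSum χ (fun i => (qBinom (q ^ 2) (n - (i + 1)) j : R)
        * ((q : R) ^ (2 * n) - ((q ^ 2 : ℕ) : R) ^ i)
        + qBinom (q ^ 2) (n - i) j * ((q ^ 2 : ℕ) : R) ^ i) N
      = (q : R) ^ ((2 * n + 1) * (n - j)) * qBinom (q ^ 2) n j := by
  have reduction : ∀ i ≤ 2 * n / 2, (qBinom (q ^ 2) (n - (i + 1)) j : R)
        * ((q : R) ^ (2 * n) - ((q ^ 2 : ℕ) : R) ^ i)
        + qBinom (q ^ 2) (n - i) j * ((q ^ 2 : ℕ) : R) ^ i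
      = (q : R) ^ (2 * (n - j)) * qBinom (q ^ 2) (n - i) j := fun i hi => by
    rw [pow_mul, pow_mul, ← Nat.cast_pow, ← qBinom.mul_sub_pow_add _ (by omega : i ≤ n)]
  have exponent : (2 * n + 1) * (n - j) = 2 * (n - j) + (2 * n - 1) * (n - j) := by
    rcases n with _ | n
    · simp
    · rw [← add_mul]
      congr 1
      omega
  rw [altSum_congr_left _ reduction, altSum_const_mul, ih, exponent, pow_add, mul_assoc]

lemma altSum_qBinom_odd_add_one {n : ℕ} {N : Matrix (Fin (2 * n + 1)) (Fin (2 * n + 1)) F}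
    (ih : ∀ j, altSum χ (fun i => (qBinom (q ^ 2) (n - i) j : R)) N
      = (q : R) ^ ((2 * n + 1) * (n - j)) * qBinom (q ^ 2) n j) (j : ℕ) :
    altSum χ (fun i => (qBinom (q ^ 2) (n + 1 - (i + 1)) (j + 1) : R)
        * ((q : R) ^ (2 * n + 1) - ((q ^ 2 : ℕ) : R) ^ i)
        + qBinom (q ^ 2) (n + 1 - i) (j + 1) * ((q ^ 2 : ℕ) : R) ^ i) N
      = (q : R) ^ ((2 * n + 1) * (n - j)) * qBinom (q ^ 2) (n + 1) (j + 1) := by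
  have reduction : ∀ i ≤ (2 * n + 1) / 2, (qBinom (q ^ 2) (n + 1 - (i + 1)) (j + 1) : R)
        * ((q : R) ^ (2 * n + 1) - ((q ^ 2 : ℕ) : R) ^ i)
        + qBinom (q ^ 2) (n + 1 - i) (j + 1) * ((q ^ 2 : ℕ) : R) ^ i
      = (q : R) ^ (2 * n + 1) * qBinom (q ^ 2) (n - i) (j + 1)
        + ((q ^ 2 : ℕ) : R) ^ (n - j) * qBinom (q ^ 2) (n - i) j := fun i hi => by
    rw [← qBinom.pascal_sub_mul_pow _ (by omega : i ≤ n), Nat.add_sub_add_right]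
    ring
  rw [altSum_congr_left _ reduction, altSum_add, altSum_const_mul, altSum_const_mul, ih, ih]
  rcases lt_or_ge n j with hj | hj
  · simp [qBinom.eq_zero_of_lt _ hj, qBinom.eq_zero_of_lt _ (Nat.succ_lt_succ hj),
      qBinom.eq_zero_of_lt _ (hj.trans j.lt_succ_self)]
  obtain ⟨a, rfl⟩ := Nat.exists_eq_add_of_le hj
  rw [qBinom.succ_succ', Nat.add_sub_cancel_left]
  rcases a with _ | a
  · simp [qBinom.eq_zero_of_lt]
  · rw [show j + (a + 1) - (j + 1) = a by omega]
    push_cast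
    ring

end CommRing

section IsDomain

variable {R : Type*} [CommRing R] [IsDomain R] {χ : AddChar F R}

lemma altSum_border_of_borderVec_eq_zero (hχ : χ ≠ 1) (φ : ℕ → R)
    {M : Matrix (Unit ⊕ κ) (Unit ⊕ κ) F} (hM : borderVec M = 0) :
    altSum χ φ M = altSum χ (fun i => φ (i + 1) * ((q : R) ^ Fintype.card κ
      - ((q ^ 2 : ℕ) : R) ^ i) + φ i * ((q ^ 2 : ℕ) : R) ^ i) M.toBlocks₂₂ := by
  classical
  rw [altSum_border, altSum]
  refine sum_congr rfl fun A _ => ?_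
  rw [hM, sum_border hχ φ A.2, mulVec_zero, if_pos rfl, if_pos rfl]
  ring

lemma altSum_border_of_borderVec_eq_single (hχ : χ ≠ 1) (φ : ℕ → R)
    {M : Matrix (Unit ⊕ (Unit ⊕ κ)) (Unit ⊕ (Unit ⊕ κ)) F} {h : F} (h0 : h ≠ 0)
    (hM : borderVec M = Sum.elim (fun _ => h) 0) :
    altSum χ φ M = altSum χ (fun i => (φ i - φ (i + 1)) * ((q ^ 2 : ℕ) : R) ^ i)
      M.toBlocks₂₂.toBlocks₂₂ := by
  classical
  have hne : (Sum.elim (fun _ => h) 0 : Unit ⊕ κ → F) ≠ 0 := fun h' =>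
    h0 (congrFun h' (Sum.inl ()))
  rw [altSum_border, hM, ← (borderEquiv F κ).sum_comp, Fintype.sum_prod_type, altSum]
  refine sum_congr rfl fun A _ => ?_
  simp only [coe_borderEquiv, sum_border hχ φ (border_mem A.2 _), border_mulVec_single h0,
    if_neg hne, mul_zero, zero_add, pairing_border]
  rw [Fintype.sum_eq_single 0 fun a ha => by rw [if_neg ha, mul_zero, mul_zero]]
  simp only [zero_dotProduct, add_zero, if_true, halfRank_border_zero A.2]

lemma exists_isSymm_altSum_eq {s : ℕ} {M : Matrix (Fin (s + 1)) (Fin (s + 1)) F} (hM : M.IsSymm) :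
    ∃ N : Matrix (Fin s) (Fin s) F, N.IsSymm ∧ ∀ {χ : AddChar F R}, χ ≠ 1 → ∀ φ : ℕ → R,
      altSum χ φ M = altSum χ (fun i => φ (i + 1) * ((q : R) ^ s - ((q ^ 2 : ℕ) : R) ^ i)
        + φ i * ((q ^ 2 : ℕ) : R) ^ i) N := by
  let e : Unit ⊕ Fin s ≃ Fin (s + 1) := Fintype.equivOfCardEq (by simp; omega)
  have hvec : borderVec (M.submatrix e e) = 0 := by
    ext i
    simp [borderVec, hM.apply]
  refine ⟨_, (hM.submatrix e).submatrix Sum.inr, fun hχ φ => ?_⟩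
  rw [← altSum_submatrix φ M e, altSum_border_of_borderVec_eq_zero hχ φ hvec, Fintype.card_fin]
  rfl

lemma exists_altSum_eq {t : ℕ} {M : Matrix (Fin t) (Fin t) F} (hM : ¬M.IsSymm) :
    ∃ s, t = s + 2 ∧ ∃ N : Matrix (Fin s) (Fin s) F,
      halfRank (M - Mᵀ) = halfRank (N - Nᵀ) + 1 ∧ ∀ {χ : AddChar F R}, χ ≠ 1 → ∀ φ : ℕ → R,
        altSum χ φ M = altSum χ (fun i => (φ i - φ (i + 1)) * ((q ^ 2 : ℕ) : R) ^ i) N := by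
  have hne : M - Mᵀ ≠ 0 := fun h => hM (sub_eq_zero.1 h).symm
  obtain ⟨s, rfl, e, G, h, D, hG, h0, hGM⟩ :=
    exists_reindex_congr_eq_border (sub_transpose_mem M) hne
  set N := Gᵀ * M.submatrix e e * G with hN
  have hsub : N - Nᵀ = Gᵀ * (M - Mᵀ).submatrix e e * G := by
    simp [hN, submatrix_sub, Matrix.mul_sub, Matrix.sub_mul, Matrix.mul_assoc]
  obtain ⟨hvec, hblock⟩ :=
    border_injective ((sub_transpose_eq_border N).symm.trans (hsub.trans hGM))
  obtain ⟨-, hD⟩ := border_injective ((sub_transpose_eq_border _).symm.trans hblock)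
  refine ⟨s, rfl, N.toBlocks₂₂.toBlocks₂₂, ?_, fun hχ φ => ?_⟩
  · rw [hD, ← halfRank_hyperbolic (hD ▸ sub_transpose_mem _) h0, ← hGM, halfRank, halfRank,
      rank_mul_eq_left_of_isUnit_det _ _ hG,
      rank_mul_eq_right_of_isUnit_det _ _ (by rwa [det_transpose]), rank_submatrix]
  · rw [← altSum_border_of_borderVec_eq_single hχ φ h0 hvec, hN, altSum_transpose_mul_mul _ _ hG,
      altSum_submatrix]

/-- The exponent `m` of the paper: `t` for odd `t`, and `t - 1` for even `t > 0`. -/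
def msrdExponent (t : ℕ) : ℕ := 2 * ((t + 1) / 2) - 1

lemma msrdExponent_even (n : ℕ) : msrdExponent (2 * n) = 2 * n - 1 := by
  rw [msrdExponent]
  omega

lemma msrdExponent_odd (n : ℕ) : msrdExponent (2 * n + 1) = 2 * n + 1 := by
  rw [msrdExponent]
  omega

theorem altSum_qBinom_of_isSymm (hχ : χ ≠ 1) {t : ℕ} {M : Matrix (Fin t) (Fin t) F}
    (hM : M.IsSymm) (j : ℕ) :
    altSum χ (fun i => (qBinom (q ^ 2) (t / 2 - i) j : R)) M
      = (q : R) ^ (msrdExponent t * (t / 2 - j)) * qBinom (q ^ 2) (t / 2) j := by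
  induction t generalizing j with
  | zero =>
    have : Subsingleton (altMatrix F (Fin 0)) := ⟨fun A B => Subtype.ext (Subsingleton.elim _ _)⟩
    simp [altSum, Fintype.sum_subsingleton _ (0 : altMatrix F (Fin 0))]
  | succ s ih =>
    obtain ⟨N, hN, hMN⟩ := exists_isSymm_altSum_eq (R := R) hM
    specialize ih hN
    rw [hMN hχ]
    obtain ⟨n, rfl | rfl⟩ := Nat.even_or_odd' s
    · have half : 2 * n / 2 = n := by omega
      have half_succ : (2 * n + 1) / 2 = n := by omega
      rw [half, msrdExponent_even] at ih
      rw [half_succ, msrdExponent_odd]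
      exact altSum_qBinom_even_add_one (ih j)
    · have half : (2 * n + 1) / 2 = n := by omega
      have half_succ : (2 * n + 1 + 1) / 2 = n + 1 := by omega
      have exponent : msrdExponent (2 * n + 1 + 1) = 2 * n + 1 := msrdExponent_even (n + 1)
      rw [half, msrdExponent_odd] at ih
      rw [half_succ, exponent]
      rcases j with _ | j
      · have total := ih 0
        simp only [qBinom.zero_right, Nat.cast_one, one_mul, mul_one, Nat.sub_zero] at total ⊢
        calc altSum χ (fun i => (q : R) ^ (2 * n + 1) - ((q ^ 2 : ℕ) : R) ^ i
                + ((q ^ 2 : ℕ) : R) ^ i) N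
            = (q : R) ^ (2 * n + 1) * altSum χ (fun _ => 1) N := by
              simp only [← altSum_const_mul, sub_add_cancel, mul_one]
          _ = (q : R) ^ ((2 * n + 1) * (n + 1)) := by rw [total, ← pow_add]; ring_nf
      · rw [Nat.add_sub_add_right]
        exact altSum_qBinom_odd_add_one ih j

theorem altSum_qBinom (hχ : χ ≠ 1) {t : ℕ} (M : Matrix (Fin t) (Fin t) F) {j : ℕ}
    (hj : j ≤ t / 2) :
    altSum χ (fun i => (qBinom (q ^ 2) (t / 2 - i) j : R)) M
      = (q : R) ^ (msrdExponent t * (t / 2 - j))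
        * qBinom (q ^ 2) (t / 2 - halfRank (M - Mᵀ)) (t / 2 - j) := by
  induction t using Nat.strong_induction_on generalizing j with
  | _ t ih =>
    by_cases hM : M.IsSymm
    · rw [altSum_qBinom_of_isSymm hχ hM, hM, sub_self, halfRank_zero, Nat.sub_zero,
        qBinom.symm _ hj]
    · obtain ⟨s, rfl, N, hrank, hMN⟩ := exists_altSum_eq (R := R) hM
      have half : (s + 2) / 2 = s / 2 + 1 := by omega
      rw [hMN hχ, hrank, half, Nat.add_sub_add_right]
      rcases j with _ | j
      · simp [altSum, qBinom.eq_zero_of_lt _ (by omega : s / 2 - halfRank (N - Nᵀ) < s / 2 + 1)]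
      rw [Nat.add_sub_add_right]
      replace hj : j ≤ s / 2 := by omega
      have reduction : ∀ i ≤ s / 2, ((qBinom (q ^ 2) (s / 2 + 1 - i) (j + 1) : R)
            - qBinom (q ^ 2) (s / 2 + 1 - (i + 1)) (j + 1)) * ((q ^ 2 : ℕ) : R) ^ i
          = (q : R) ^ (2 * (s / 2 - j)) * qBinom (q ^ 2) (s / 2 - i) j := fun i hi => by
        rw [Nat.add_sub_add_right, qBinom.pascal_sub_mul_pow _ hi, pow_mul, Nat.cast_pow]
      have exponent : msrdExponent (s + 2) * (s / 2 - j)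
          = 2 * (s / 2 - j) + msrdExponent s * (s / 2 - j) := by
        rcases Nat.eq_zero_or_pos s with rfl | hs
        · simp
        · rw [← add_mul, msrdExponent, msrdExponent]
          congr 1
          omega
      rw [altSum_congr_left _ reduction, altSum_const_mul, ih s (by omega) N hj, exponent, pow_add,
        mul_assoc]

open Classical in
lemma sum_char_traceDual (hχ : χ ≠ 1) (C : Submodule F (Matrix ι ι F)) (A : Matrix ι ι F) :
    ∑ M : traceDual C, χ (pairing F ι A M)
      = if A ∈ C then (Nat.card (traceDual C) : R) else 0 := by
  have hl : pairing F ι A ∘ₗ (traceDual C).subtype = 0 ↔ A ∈ C := by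
    rw [mem_iff_forall_traceDual]
    simp [LinearMap.ext_iff]
  refine (sum_char hχ (pairing F ι A ∘ₗ (traceDual C).subtype)).trans ?_
  simp only [hl]

/-! ### The weight distribution of a code -/

lemma natCard_traceDual_mul_sum (hχ : χ ≠ 1) {C : Submodule F (Matrix ι ι F)}
    (hC : C ≤ altMatrix F ι) (φ : ℕ → R) :
    Nat.card (traceDual C) * ∑ A : C, φ (halfRank A.1) = ∑ M : traceDual C, altSum χ φ M.1 := by
  classical
  calc Nat.card (traceDual C) * ∑ A : C, φ (halfRank A.1)
      = ∑ A : altMatrix F ι, if A.1 ∈ C then Nat.card (traceDual C) * φ (halfRank A.1) else 0 := by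
        rw [mul_sum, ← sum_filter]
        exact sum_bij' (fun A _ => ⟨A.1, hC A.2⟩) (fun A hA => ⟨A.1, (mem_filter.1 hA).2⟩)
          (by simp) (by simp) (by simp) (by simp) (by simp)
    _ = ∑ A : altMatrix F ι, ∑ M : traceDual C, χ (pairing F ι A M) * φ (halfRank A.1) := by
        simp only [← sum_mul, sum_char_traceDual hχ, ite_mul, zero_mul]
    _ = _ := sum_comm

end IsDomain

section Code

variable {t : ℕ} {C : Submodule F (Matrix (Fin t) (Fin t) F)}

theorem natCard_traceDual_mul_sum_qBinom (hC : C ≤ altMatrix F (Fin t)) {j : ℕ} (hj : j ≤ t / 2) :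
    Nat.card (traceDual C) * ∑ A : C, qBinom (q ^ 2) (t / 2 - halfRank A.1) j
      = q ^ (msrdExponent t * (t / 2 - j))
        * ∑ M : traceDual C, qBinom (q ^ 2) (t / 2 - halfRank (M.1 - M.1ᵀ)) (t / 2 - j) := by
  obtain ⟨χ, hχ⟩ := AddChar.exists_apply_ne_zero.2 (one_ne_zero (α := F))
  have transform := natCard_traceDual_mul_sum (AddChar.ne_one_iff.2 ⟨1, hχ⟩) hC
    fun i => (qBinom (q ^ 2) (t / 2 - i) j : ℂ)
  simp only [altSum_qBinom (AddChar.ne_one_iff.2 ⟨1, hχ⟩) _ hj, ← mul_sum] at transform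
  exact_mod_cast transform

/-- The number `c_i` of matrices of rank `2 * i` in a code. -/
noncomputable def rankWeight (C : Submodule F (Matrix (Fin t) (Fin t) F)) (i : ℕ) : ℕ :=
  Nat.card {A // A ∈ C ∧ A.rank = 2 * i}

lemma sum_halfRank (hC : C ≤ altMatrix F (Fin t)) (φ : ℕ → ℕ) :
    ∑ A : C, φ (halfRank A.1) = ∑ i ∈ range (t / 2 + 1), φ i * rankWeight C i := by
  classical
  rw [← sum_fiberwise_of_maps_to (g := fun A : C => halfRank A.1) (t := range (t / 2 + 1))
    fun A _ => mem_range.2 (Nat.lt_succ_of_le (halfRank_le A.1))]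
  refine sum_congr rfl fun i _ => ?_
  have hcard : #{A : C | halfRank A.1 = i} = rankWeight C i := by
    rw [rankWeight, ← Fintype.card_subtype, ← Nat.card_eq_fintype_card]
    refine Nat.card_congr ((Equiv.subtypeEquivRight fun A => ?_).trans
      (Equiv.subtypeSubtypeEquivSubtypeInter (· ∈ C) fun A => A.rank = 2 * i))
    rw [← two_mul_halfRank (hC A.2)]
    omega
  rw [sum_congr rfl fun A hA => congrArg φ (mem_filter.1 hA).2, sum_const, hcard, smul_eq_mul,
    mul_comm]

/-- A maximum skew rank distance code: a code of minimum rank at least `2 * d` whose cardinality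
attains the Singleton bound. -/
structure IsMSRD (C : Submodule F (Matrix (Fin t) (Fin t) F)) (d : ℕ) : Prop where
  le_altMatrix : C ≤ altMatrix F (Fin t)
  one_le : 1 ≤ d
  le_half : d ≤ t / 2
  two_mul_le_rank : ∀ A ∈ C, A ≠ 0 → 2 * d ≤ A.rank
  natCard_eq : Nat.card C = q ^ (msrdExponent t * (t / 2 - d + 1))

namespace IsMSRD

variable {d : ℕ}

lemma le_halfRank (hC : IsMSRD C d) {A : Matrix (Fin t) (Fin t) F} (hA : A ∈ C) (h0 : A ≠ 0) :
    d ≤ halfRank A :=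
  (Nat.le_div_iff_mul_le two_pos).2 (mul_comm 2 d ▸ hC.two_mul_le_rank A hA h0)

lemma rankWeight_zero (hC : IsMSRD C d) : rankWeight C 0 = 1 := by
  rw [rankWeight, Nat.card_eq_one_iff_unique]
  refine ⟨⟨fun A B => Subtype.ext ?_⟩, ⟨0, C.zero_mem, rank_zero⟩⟩
  have eq_zero (A : {A // A ∈ C ∧ A.rank = 2 * 0}) : A.1 = 0 :=
    (halfRank_eq_zero_iff (hC.le_altMatrix A.2.1)).1 (by rw [halfRank, A.2.2])
  rw [eq_zero A, eq_zero B]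

lemma rankWeight_eq_zero (hC : IsMSRD C d) {i : ℕ} (hi : 1 ≤ i) (hid : i < d) :
    rankWeight C i = 0 := by
  have : IsEmpty {A // A ∈ C ∧ A.rank = 2 * i} := ⟨fun ⟨A, hA, hrank⟩ => by
    have h0 : A ≠ 0 := by
      rintro rfl
      rw [rank_zero] at hrank
      omega
    have := hC.two_mul_le_rank A hA h0
    omega⟩
  exact Nat.card_of_isEmpty

lemma natCard_traceDual (hC : IsMSRD C d) :
    Nat.card (traceDual C) = q ^ (msrdExponent t * (d - 1))
      * Nat.card {M : traceDual C // halfRank (M.1 - M.1ᵀ) = 0} := by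
  have hd := hC.one_le
  have hdn := hC.le_half
  have total := natCard_traceDual_mul_sum_qBinom hC.le_altMatrix (Nat.zero_le (t / 2))
  rw [Nat.sub_zero, (qBinom.sum_eq_iff (q ^ 2) (t / 2) (t / 2)
    fun M : traceDual C => halfRank (M.1 - M.1ᵀ)).2 fun M hM => by omega] at total
  simp only [qBinom.zero_right, qBinom.self, sum_const, card_univ, smul_eq_mul, mul_one,
    ← Nat.card_eq_fintype_card (α := C), hC.natCard_eq] at total
  refine Nat.eq_of_mul_eq_mul_right (pow_pos Fintype.card_pos _) (total.trans ?_)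
  rw [mul_right_comm, ← pow_add, ← mul_add, show d - 1 + (t / 2 - d + 1) = t / 2 by omega]

lemma sum_qBinom_top (hC : IsMSRD C d) :
    ∑ A : C, qBinom (q ^ 2) (t / 2 - halfRank A.1) (t / 2 - d + 1)
      = qBinom (q ^ 2) (t / 2) (t / 2 - d + 1) := by
  rw [Fintype.sum_eq_single 0 fun A hA => qBinom.eq_zero_of_lt _ ?_]
  · simp
  · have := hC.le_halfRank A.2 (by simpa using hA)
    omega

lemma sub_halfRank_lt_of_mem_traceDual (hC : IsMSRD C d) (M : traceDual C)
    (hM : halfRank (M.1 - M.1ᵀ) ≠ 0) : t / 2 - halfRank (M.1 - M.1ᵀ) < d - 1 := by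
  have hd := hC.one_le
  have hdn := hC.le_half
  refine (qBinom.sum_eq_iff (q ^ 2) (t / 2) (d - 1)
    fun M : traceDual C => halfRank (M.1 - M.1ᵀ)).1 ?_ M hM
  have top := natCard_traceDual_mul_sum_qBinom hC.le_altMatrix
    (by omega : t / 2 - d + 1 ≤ t / 2)
  rw [sum_qBinom_top hC, hC.natCard_traceDual, ← qBinom.symm _ (by omega : t / 2 - d + 1 ≤ t / 2),
    show t / 2 - (t / 2 - d + 1) = d - 1 by omega, mul_assoc] at top
  exact (Nat.eq_of_mul_eq_mul_left (pow_pos Fintype.card_pos _) top).symm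

theorem sum_qBinom (hC : IsMSRD C d) {j : ℕ} (hj : j ≤ t / 2 - d + 1) :
    ∑ A : C, qBinom (q ^ 2) (t / 2 - halfRank A.1) j
      = (q ^ msrdExponent t) ^ (t / 2 - d + 1 - j) * qBinom (q ^ 2) (t / 2) j := by
  have hd := hC.one_le
  have hdn := hC.le_half
  have moment := natCard_traceDual_mul_sum_qBinom hC.le_altMatrix (by omega : j ≤ t / 2)
  rw [(qBinom.sum_eq_iff (q ^ 2) (t / 2) (t / 2 - j)
    fun M : traceDual C => halfRank (M.1 - M.1ᵀ)).2 fun M hM => by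
      have := hC.sub_halfRank_lt_of_mem_traceDual M hM
      omega, qBinom.symm _ (by omega : j ≤ t / 2)] at moment
  refine Nat.eq_of_mul_eq_mul_left (Nat.card_pos (α := traceDual C)) (moment.trans ?_)
  rw [hC.natCard_traceDual, ← pow_mul,
    show t / 2 - j = d - 1 + (t / 2 - d + 1 - j) by omega, mul_add, pow_add]
  ring

theorem rankWeight_add (hC : IsMSRD C d) {R : Type*} [CommRing R] {r : ℕ} (hr : r ≤ t / 2 - d) :
    (rankWeight C (d + r) : R) = ∑ i ∈ range (r + 1),
      (-1 : R) ^ (r - i) * ((q ^ 2 : ℕ) : R) ^ ((r - i).choose 2)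
        * qBinom (q ^ 2) (d + r) (d + i) * qBinom (q ^ 2) (t / 2) (d + r)
        * (((q : R) ^ msrdExponent t) ^ (i + 1) - 1) := by
  refine qBinom.eq_sum_of_moments (w := fun i => (rankWeight C i : R)) (q ^ 2) hC.one_le
    hC.le_half _ (by rw [hC.rankWeight_zero, Nat.cast_one])
    (fun i hi hid => by rw [hC.rankWeight_eq_zero hi hid, Nat.cast_zero]) (fun j hj => ?_) hr
  have moment := (sum_halfRank hC.le_altMatrix fun i => qBinom (q ^ 2) (t / 2 - i) j).symm.trans
    (hC.sum_qBinom (by omega))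
  exact_mod_cast congrArg (Nat.cast : ℕ → R) moment

end IsMSRD

end Code

end AltSum

lemma msrdExponent_eq_div {t : ℕ} (ht : 2 ≤ t) :
    msrdExponent t = t * (t - 1) / (2 * (t / 2)) := by
  obtain ⟨a, rfl | rfl⟩ := Nat.even_or_odd' t
  · rw [msrdExponent_even, Nat.mul_div_cancel_left a two_pos,
      Nat.mul_div_cancel_left _ (by omega)]
  · rw [msrdExponent_odd, show (2 * a + 1) / 2 = a by omega, Nat.add_sub_cancel,
      Nat.mul_div_cancel _ (by omega)]

end altMatrix

/-- The skew rank weight distribution of a linear MSRD code attaining the Singleton bound. -/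
theorem stmt19 (q : ℕ) (hq : IsPrimePow q) (F : Type*) [Field F] [Fintype F]
    (hF : Fintype.card F = q) (t : ℕ) (ht : 2 ≤ t) (n m : ℕ)
    (hn : n = t / 2) (hm : m = t * (t - 1) / (2 * n))
    (𝒞 : Submodule F (Matrix (Fin t) (Fin t) F))
    (h𝒞 : ∀ A ∈ 𝒞, A.transpose = -A ∧ ∀ i, A i i = 0)
    (c : ℕ → ℕ)
    (hc : ∀ i, c i = Nat.card {A : Matrix (Fin t) (Fin t) F // A ∈ 𝒞 ∧ A.rank = 2 * i})
    (d : ℕ) (hd1 : 1 ≤ d) (hd2 : d ≤ n)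
    (hmin : ∀ A ∈ 𝒞, A ≠ 0 → 2 * d ≤ A.rank)
    (hMSRD : Nat.card 𝒞 = q ^ (m * (n - d + 1))) :
    c 0 = 1 ∧ (∀ i, 1 ≤ i → i ≤ d - 1 → c i = 0) ∧
    ∀ r ≤ n - d, (c (d + r) : ℝ)
      = ∑ i ∈ Finset.range (r + 1),
          (-1 : ℝ) ^ (r - i) * (q : ℝ) ^ ((r - i) * (r - i - 1)) *
            gaussQ (q : ℝ) ((d + r : ℕ) : ℝ) (d + i) * gaussQ (q : ℝ) (n : ℝ) (d + r) *
            ((q : ℝ) ^ (m * (i + 1)) - 1) := by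
  subst hF hn
  obtain rfl : c = altMatrix.rankWeight 𝒞 := funext hc
  obtain rfl : m = altMatrix.msrdExponent t := hm.trans (altMatrix.msrdExponent_eq_div ht).symm
  have h : altMatrix.IsMSRD 𝒞 d := ⟨h𝒞, hd1, hd2, hmin, hMSRD⟩
  refine ⟨h.rankWeight_zero, fun i hi hid => h.rankWeight_eq_zero hi (by omega), fun r hr => ?_⟩
  rw [h.rankWeight_add hr]
  refine sum_congr rfl fun i _ => ?_
  have exponent : (Fintype.card F : ℝ) ^ ((r - i) * (r - i - 1))
      = ((Fintype.card F ^ 2 : ℕ) : ℝ) ^ ((r - i).choose 2) := by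
    rw [Nat.choose_two_right, Nat.cast_pow, ← pow_mul,
      Nat.two_mul_div_two_of_even (Nat.even_mul_pred_self _)]
  rw [exponent, gaussQ_natCast hq.one_lt, gaussQ_natCast hq.one_lt, ← pow_mul]
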